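/- Let p ≥ 3 be an integer, h = ⌊p/2⌋, and let g be an element of BS(1,p). Then there exist integers m ≥ 0, s ≥ 0, k ≥ −m and integers i_{−m}, i_{−m+1}, …, i_k with |i_l| ≤ h for all −m ≤ l ≤ k−1 and |i_k| ≤ h+1, such that one of the following holds: (1) 0 ≤ s ≤ m, 0 < m, (1 ≤ |i_k| or (k = −m and s = 0)), g = t^{k} a^{i_k} t^{−1} a^{i_{k−1}} t^{−1} ⋯ t^{−1} a^{i_{−m}} t^{s}, and l(g) = |k| + k + m + s + Σ_{l=−m}^{k} |i_l|; or (2) 0 ≤ m ≤ s, (1 ≤ |i_k| or k = −m = 0), g = t^{−m} a^{i_{−m}} t a^{i_{−m+1}} t ⋯ t a^{i_k} t^{s−m−k}, and l(g) = m + (k+m) + |s − m − k| + Σ_{l=−m}^{k} |i_l|. Moreover, in each case g = t^{−m} a^{j} t^{s} where j = Σ_{l=−m}^{k} i_l p^{l+m}. -/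

import Mathlib

/-- The single relator `t a t⁻¹ a^{-p}` of the Baumslag–Solitar group `BS(1,p)`,
where `a` is the image of `0 : Fin 2` and `t` is the image of `1 : Fin 2`. -/
def BSRel (p : ℤ) : Set (FreeGroup (Fin 2)) :=
  {FreeGroup.of 1 * FreeGroup.of 0 * (FreeGroup.of 1)⁻¹ * (FreeGroup.of 0) ^ (-p)}

/-- The Baumslag–Solitar group `BS(1,p) = ⟨a, t ∣ t a t⁻¹ = a^p⟩`. -/
abbrev BS (p : ℤ) : Type := PresentedGroup (BSRel p)

/-- The generator `a` of `BS(1,p)`. -/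
def BSa (p : ℤ) : BS p := PresentedGroup.of 0

/-- The generator `t` of `BS(1,p)`. -/
def BSt (p : ℤ) : BS p := PresentedGroup.of 1

/-- The word length of `g ∈ BS(1,p)` with respect to the generating set
`{a, a⁻¹, t, t⁻¹}`: the least `n` such that `g` is a product of `n` generators. -/
noncomputable def BSlength (p : ℤ) (g : BS p) : ℕ :=
  sInf {n : ℕ | ∃ w : List (BS p), w.length = n ∧
    (∀ x ∈ w, x = BSa p ∨ x = (BSa p)⁻¹ ∨ x = BSt p ∨ x = (BSt p)⁻¹) ∧ w.prod = g}

/-!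
Reading a word in `a^{±1}, t^{±1}` letter by letter, the exponent of `t` traces a path of heights,
and every `a^{±1}` met at height `u - m`, where `-m` is the lowest height, contributes `± p ^ u` to
the exponent of `a`. Hence a word spells `t^{-m} a^{P(p)} t^s`, where the coefficients of the
integer polynomial `P` count the letters `a^{±1}` at each height, and it is at least as long as a
shortest path through all the heights involved plus the sum of the `|P.coeff u|`.

Carrying makes `P` balanced without increasing this cost. Moving `± p` copies of `a` at one height
to a single `a^{±1}` one level up does not lengthen the word as soon as the digit exceeds
`⌊|p| / 2⌋`, and for `3 ≤ |p|` it saves at least two letters if the digit exceeds `⌊|p| / 2⌋ + 1`.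
Those two letters pay for climbing to a new top level and back, so only the leading digit may have
to stay at `⌊|p| / 2⌋ + 1`. Spending the balanced digits on the way up if `m ≤ s`, and on the way
down if `s ≤ m`, then gives a word that attains the lower bound.
-/

open Polynomial
open scoped Pointwise

section WordLength

variable {M : Type*} [Monoid M]

/-- The word length of `g` over the alphabet `S`; as an infimum in `ℕ` it is `0` if no word
spells `g`. -/
noncomputable def wordLength (S : Set M) (g : M) : ℕ := sInf {n | g ∈ S ^ n}

theorem wordLength_le {S : Set M} {g : M} {n : ℕ} (hg : g ∈ S ^ n) : wordLength S g ≤ n :=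
  Nat.sInf_le hg

theorem mem_pow_wordLength {S : Set M} {g : M} (hg : ∃ n, g ∈ S ^ n) : g ∈ S ^ wordLength S g :=
  Nat.sInf_mem hg

theorem mul_mem_pow_add {S : Set M} {x y : M} {m n : ℕ} (hx : x ∈ S ^ m) (hy : y ∈ S ^ n) :
    x * y ∈ S ^ (m + n) :=
  pow_add S m n ▸ Set.mul_mem_mul hx hy

theorem mem_pow_iff_exists_list {S : Set M} {g : M} {n : ℕ} :
    g ∈ S ^ n ↔ ∃ w : List M, w.length = n ∧ (∀ x ∈ w, x ∈ S) ∧ w.prod = g := by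
  rw [Set.mem_pow]
  constructor
  · rintro ⟨f, rfl⟩
    exact ⟨List.ofFn fun i => (f i : M), by simp, by simp [List.mem_ofFn], rfl⟩
  · rintro ⟨w, rfl, hw, rfl⟩
    exact ⟨fun i => ⟨w[i], hw _ (List.getElem_mem _)⟩, by simp⟩

end WordLength

section Letters

variable {G : Type*} [Group G]

/-- The alphabet `{a, a⁻¹, t, t⁻¹}`; the elements spelled by its words of length `n` form the
pointwise power `letters a t ^ n`. -/
def letters (a t : G) : Set G := {a, a⁻¹, t, t⁻¹}

theorem inv_letters (a t : G) : (letters a t)⁻¹ = letters a t := by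
  ext x
  simp only [letters, Set.mem_inv, Set.mem_insert_iff, Set.mem_singleton_iff, inv_eq_iff_eq_inv,
    inv_inv]
  tauto

theorem inv_mem_letters_pow {a t x : G} {n : ℕ} (hx : x ∈ letters a t ^ n) :
    x⁻¹ ∈ letters a t ^ n := by
  rw [← inv_letters, inv_pow]
  exact Set.inv_mem_inv.2 hx

theorem zpow_mem_letters_pow {a t x : G} (hx : x ∈ letters a t) (z : ℤ) :
    x ^ z ∈ letters a t ^ z.natAbs := by
  obtain ⟨n, rfl | rfl⟩ := z.eq_nat_or_neg
  · simpa using Set.pow_mem_pow hx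
  · simpa using inv_mem_letters_pow (Set.pow_mem_pow (n := n) hx)

theorem zpow_left_mem_letters_pow (a t : G) (z : ℤ) : a ^ z ∈ letters a t ^ z.natAbs :=
  zpow_mem_letters_pow (by simp [letters]) z

theorem zpow_right_mem_letters_pow (a t : G) (z : ℤ) : t ^ z ∈ letters a t ^ z.natAbs :=
  zpow_mem_letters_pow (by simp [letters]) z

theorem exists_mem_letters_pow_of_mem_closure {a t g : G} (hg : g ∈ Subgroup.closure {a, t}) :
    ∃ n, g ∈ letters a t ^ n := by
  induction hg using Subgroup.closure_induction with
  | mem x hx =>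
    rcases hx with rfl | rfl
    exacts [⟨1, by simp [letters]⟩, ⟨1, by simp [letters]⟩]
  | one => exact ⟨0, by simp⟩
  | mul x y _ _ hx hy =>
    obtain ⟨m, hm⟩ := hx
    obtain ⟨n, hn⟩ := hy
    exact ⟨m + n, mul_mem_pow_add hm hn⟩
  | inv x _ hx =>
    obtain ⟨n, hn⟩ := hx
    exact ⟨n, inv_mem_letters_pow hn⟩

end Letters

section Words

variable {G : Type*} [Group G] {a t : G} {p : ℤ}

/-- The word `a^{f 0} t a^{f 1} t ⋯ a^{f (n-1)} t`, which spends the exponents `f` while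
climbing. -/
def ascendingWord (a t : G) (f : ℕ → ℤ) (n : ℕ) : G :=
  (List.ofFn fun u : Fin n => a ^ f u * t).prod

/-- The word `a^{f (n-1)} t⁻¹ ⋯ a^{f 1} t⁻¹ a^{f 0} t⁻¹`, which spends the exponents `f` while
going down. -/
def descendingWord (a t : G) (f : ℕ → ℤ) (n : ℕ) : G :=
  (List.ofFn fun u : Fin n => a ^ f (n - 1 - u) * t⁻¹).prod

/-- The element `t^{-m} a^j t^s`. -/
def normalForm (a t : G) (m : ℕ) (j : ℤ) (s : ℕ) : G :=
  t ^ (-(m : ℤ)) * a ^ j * t ^ (s : ℤ)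

theorem ascendingWord_succ (a t : G) (f : ℕ → ℤ) (n : ℕ) :
    ascendingWord a t f (n + 1) = ascendingWord a t f n * (a ^ f n * t) := by
  simp only [ascendingWord, List.ofFn_succ', List.concat_eq_append, List.prod_append,
    Fin.val_castSucc, Fin.val_last, List.prod_singleton]

theorem descendingWord_succ (a t : G) (f : ℕ → ℤ) (n : ℕ) :
    descendingWord a t f (n + 1) = a ^ f n * t⁻¹ * descendingWord a t f n := by
  simp [descendingWord, List.ofFn_succ, Nat.sub_sub, Nat.add_comm]

theorem descendingWord_eq_conj_inv_ascendingWord (a t : G) (f : ℕ → ℤ) (n : ℕ) :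
    descendingWord a t f n = t * (ascendingWord a t (-f) n)⁻¹ * t⁻¹ := by
  induction n with
  | zero => simp [ascendingWord, descendingWord]
  | succ n ih =>
    rw [descendingWord_succ, ascendingWord_succ, ih, Pi.neg_apply]
    group

theorem semiconjBy_pow_zpow (hat : SemiconjBy t a (a ^ p)) (n : ℕ) (c : ℤ) :
    SemiconjBy (t ^ n) (a ^ c) (a ^ (c * p ^ n)) := by
  induction n with
  | zero => simp
  | succ n ih =>
    have hstep := hat.zpow_right (c * p ^ n)
    rw [← zpow_mul, mul_left_comm, ← pow_succ'] at hstep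
    rw [pow_succ']
    exact hstep.mul_left ih

theorem ascendingWord_eq (hat : SemiconjBy t a (a ^ p)) (f : ℕ → ℤ) (n : ℕ) :
    ascendingWord a t f n = a ^ (∑ u ∈ Finset.range n, f u * p ^ u) * t ^ n := by
  induction n with
  | zero => simp [ascendingWord]
  | succ n ih =>
    calc ascendingWord a t f (n + 1)
        = a ^ (∑ u ∈ Finset.range n, f u * p ^ u) * (t ^ n * a ^ f n) * t := by
          rw [ascendingWord_succ, ih]
          simp only [mul_assoc]
      _ = a ^ (∑ u ∈ Finset.range (n + 1), f u * p ^ u) * t ^ (n + 1) := by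
          rw [(semiconjBy_pow_zpow hat n (f n)).eq, Finset.sum_range_succ, zpow_add, pow_succ]
          simp only [mul_assoc]

theorem descendingWord_eq (hat : SemiconjBy t a (a ^ p)) (f : ℕ → ℤ) (n : ℕ) :
    descendingWord a t f n =
      t * (t ^ n)⁻¹ * a ^ (∑ u ∈ Finset.range n, f u * p ^ u) * t⁻¹ := by
  rw [descendingWord_eq_conj_inv_ascendingWord, ascendingWord_eq hat]
  simp [mul_assoc]

theorem normalForm_eq_ascendingWord (hat : SemiconjBy t a (a ^ p)) (m s n : ℕ) (f : ℕ → ℤ) :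
    normalForm a t m (∑ u ∈ Finset.range (n + 1), f u * p ^ u) s =
      t ^ (-(m : ℤ)) * ascendingWord a t f (n + 1) * t ^ ((s : ℤ) - n - 1) := by
  rw [ascendingWord_eq hat, normalForm]
  group

theorem normalForm_eq_descendingWord (hat : SemiconjBy t a (a ^ p)) (m s n : ℕ) (f : ℕ → ℤ) :
    normalForm a t m (∑ u ∈ Finset.range (n + 1), f u * p ^ u) s =
      t ^ ((n : ℤ) - m) * descendingWord a t f (n + 1) * t ^ ((s : ℤ) + 1) := by
  rw [descendingWord_eq hat, normalForm]
  group

theorem ascendingWord_mul_inv_mem_letters_pow (a t : G) (f : ℕ → ℤ) (n : ℕ) :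
    ascendingWord a t f (n + 1) * t⁻¹ ∈
      letters a t ^ (n + ∑ u ∈ Finset.range (n + 1), (f u).natAbs) := by
  induction n with
  | zero => simpa [ascendingWord] using zpow_left_mem_letters_pow a t (f 0)
  | succ n ih =>
    have hword := mul_mem_pow_add
      (mul_mem_pow_add ih (zpow_right_mem_letters_pow a t 1))
      (zpow_left_mem_letters_pow a t (f (n + 1)))
    convert hword using 1
    · rw [Finset.sum_range_succ, Int.natAbs_one]
      congr 1
      ring
    · rw [ascendingWord_succ _ _ _ (n + 1)]
      group

theorem descendingWord_mul_mem_letters_pow (a t : G) (f : ℕ → ℤ) (n : ℕ) :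
    descendingWord a t f (n + 1) * t ∈
      letters a t ^ (n + ∑ u ∈ Finset.range (n + 1), (f u).natAbs) := by
  have hword := inv_mem_letters_pow (ascendingWord_mul_inv_mem_letters_pow a t (-f) n)
  simpa [descendingWord_eq_conj_inv_ascendingWord] using hword

theorem wordLength_normalForm_le_ascending (hat : SemiconjBy t a (a ^ p)) (m s n : ℕ)
    (f : ℕ → ℤ) :
    wordLength (letters a t) (normalForm a t m (∑ u ∈ Finset.range (n + 1), f u * p ^ u) s) ≤
      m + (n + ∑ u ∈ Finset.range (n + 1), (f u).natAbs) + ((s : ℤ) - n).natAbs := by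
  have hword := mul_mem_pow_add
    (mul_mem_pow_add (zpow_right_mem_letters_pow a t (-m))
      (ascendingWord_mul_inv_mem_letters_pow a t f n))
    (zpow_right_mem_letters_pow a t (s - n))
  rw [Int.natAbs_neg, Int.natAbs_natCast] at hword
  refine wordLength_le ?_
  convert hword using 1
  rw [normalForm_eq_ascendingWord hat]
  group

theorem wordLength_normalForm_le_descending (hat : SemiconjBy t a (a ^ p)) (m s n : ℕ)
    (f : ℕ → ℤ) :
    wordLength (letters a t) (normalForm a t m (∑ u ∈ Finset.range (n + 1), f u * p ^ u) s) ≤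
      ((n : ℤ) - m).natAbs + (n + ∑ u ∈ Finset.range (n + 1), (f u).natAbs) + s := by
  have hword := mul_mem_pow_add
    (mul_mem_pow_add (zpow_right_mem_letters_pow a t (n - m))
      (descendingWord_mul_mem_letters_pow a t f n))
    (zpow_right_mem_letters_pow a t s)
  rw [Int.natAbs_natCast s] at hword
  refine wordLength_le ?_
  convert hword using 1
  rw [normalForm_eq_descendingWord hat]
  group

end Words

section CoeffNorm

/-- The sum of the absolute values of the coefficients of an integer polynomial. -/
def coeffNorm (P : ℤ[X]) : ℕ := P.sum fun _ c => c.natAbs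

theorem coeffNorm_eq_sum_range (P : ℤ[X]) :
    coeffNorm P = ∑ u ∈ Finset.range (P.natDegree + 1), (P.coeff u).natAbs :=
  P.sum_over_range fun _ => Int.natAbs_zero

theorem coeffNorm_eq_sum_range_of_natDegree_lt {P : ℤ[X]} {n : ℕ} (hn : P.natDegree < n) :
    coeffNorm P = ∑ u ∈ Finset.range n, (P.coeff u).natAbs :=
  P.sum_over_range' (fun _ => Int.natAbs_zero) n hn

theorem natCast_coeffNorm (P : ℤ[X]) :
    (coeffNorm P : ℤ) = ∑ u ∈ Finset.range (P.natDegree + 1), |P.coeff u| := by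
  rw [coeffNorm_eq_sum_range]
  push_cast
  rfl

theorem coeffNorm_add_le (P Q : ℤ[X]) : coeffNorm (P + Q) ≤ coeffNorm P + coeffNorm Q := by
  have hadd := natDegree_add_le P Q
  obtain ⟨n, hP, hQ⟩ : ∃ n, P.natDegree < n ∧ Q.natDegree < n :=
    ⟨max P.natDegree Q.natDegree + 1, by omega, by omega⟩
  rw [coeffNorm_eq_sum_range_of_natDegree_lt hP, coeffNorm_eq_sum_range_of_natDegree_lt hQ,
    coeffNorm_eq_sum_range_of_natDegree_lt (n := n) (by omega), ← Finset.sum_add_distrib]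
  exact Finset.sum_le_sum fun u _ => by simpa using Int.natAbs_add_le (P.coeff u) (Q.coeff u)

theorem coeffNorm_C_mul_X_pow (c : ℤ) (n : ℕ) : coeffNorm (C c * X ^ n) = c.natAbs := by
  rw [C_mul_X_pow_eq_monomial]
  exact sum_monomial_index c _ Int.natAbs_zero

theorem coeffNorm_C (c : ℤ) : coeffNorm (C c) = c.natAbs :=
  sum_C_index Int.natAbs_zero

theorem natDegree_mul_X_add_C_le {R : Type*} [Semiring R] (P : R[X]) (c : R) :
    (P * X + C c).natDegree ≤ P.natDegree + 1 := by
  rw [natDegree_add_C]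
  exact natDegree_mul_le_of_le le_rfl natDegree_X_le

theorem coeffNorm_mul_X_add_C (P : ℤ[X]) (c : ℤ) :
    coeffNorm (P * X + C c) = coeffNorm P + c.natAbs := by
  have hdeg : (P * X + C c).natDegree < P.natDegree + 1 + 1 :=
    Nat.lt_succ_of_le (natDegree_mul_X_add_C_le P c)
  rw [coeffNorm_eq_sum_range_of_natDegree_lt hdeg, Finset.sum_range_succ', coeffNorm_eq_sum_range]
  simp only [coeff_add, coeff_mul_X, coeff_C_succ, add_zero, mul_coeff_zero, coeff_X_zero,
    mul_zero, coeff_C_zero, zero_add]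

theorem coeffNorm_mul_X (P : ℤ[X]) : coeffNorm (P * X) = coeffNorm P := by
  simpa using coeffNorm_mul_X_add_C P 0

end CoeffNorm

section Balancing

variable {p : ℤ} {h : ℕ}

/-- The digit condition of the standard forms: coefficients are at most `h` in absolute value,
except that the leading one may reach `h + 1`. -/
def IsBalanced (h : ℕ) (P : ℤ[X]) : Prop :=
  (∀ u < P.natDegree, (P.coeff u).natAbs ≤ h) ∧ P.leadingCoeff.natAbs ≤ h + 1

theorem isBalanced_C {c : ℤ} (hc : c.natAbs ≤ h + 1) : IsBalanced h (C c) := by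
  simpa [IsBalanced, -eq_intCast] using hc

theorem IsBalanced.mul_X_add_C {P : ℤ[X]} (hP : IsBalanced h P) {r : ℤ} (hr : r.natAbs ≤ h) :
    IsBalanced h (P * X + C r) := by
  rcases eq_or_ne P 0 with rfl | hP0
  · simpa using isBalanced_C (hr.trans h.le_succ)
  have hdeg : (P * X + C r).natDegree = P.natDegree + 1 := by
    rw [natDegree_add_C, natDegree_mul_X hP0]
  refine ⟨fun u hu => ?_, ?_⟩
  · cases u with
    | zero => simpa using hr
    | succ u => simpa [-eq_intCast] using hP.1 u (by omega)
  · rw [leadingCoeff, hdeg]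
    simpa [-eq_intCast] using hP.2

theorem exists_natAbs_sub_mul_lt (hp : 3 ≤ p.natAbs) {n : ℤ} (hn : p.natAbs / 2 < n.natAbs) :
    ∃ ε : ℤ, ε.natAbs = 1 ∧ (n - ε * p).natAbs + 1 ≤ n.natAbs ∧
      (p.natAbs / 2 + 1 < n.natAbs → (n - ε * p).natAbs + 3 ≤ n.natAbs) := by
  by_cases hsign : 0 < n ↔ 0 < p
  · exact ⟨1, by omega⟩
  · exact ⟨-1, by omega⟩

theorem exists_carry (hp : 3 ≤ p.natAbs) (n : ℤ) :
    ∃ r c : ℤ, n = r + c * p ∧ r.natAbs ≤ p.natAbs / 2 ∧ r.natAbs + c.natAbs ≤ n.natAbs ∧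
      (p.natAbs / 2 + 1 < n.natAbs → r.natAbs + c.natAbs + 2 ≤ n.natAbs) := by
  induction hk : n.natAbs using Nat.strong_induction_on generalizing n with
  | _ k ih =>
    subst hk
    rcases le_or_gt n.natAbs (p.natAbs / 2) with hn | hn
    · exact ⟨n, 0, by omega⟩
    obtain ⟨ε, hε, hlt, hsave⟩ := exists_natAbs_sub_mul_lt hp hn
    obtain ⟨r, c, hval, hr, hrc, -⟩ := ih _ (by omega) (n - ε * p) rfl
    exact ⟨r, c + ε, by linear_combination hval, hr, by omega, by omega⟩

theorem exists_isBalanced_eval_eq (hp : 3 ≤ p.natAbs) (c : ℤ) :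
    ∃ Q : ℤ[X], Q.eval p = c ∧ IsBalanced (p.natAbs / 2) Q ∧
      2 * Q.natDegree + coeffNorm Q ≤ c.natAbs := by
  induction hk : c.natAbs using Nat.strong_induction_on generalizing c with
  | _ k ih =>
    subst hk
    rcases le_or_gt c.natAbs (p.natAbs / 2 + 1) with hc | hc
    · exact ⟨C c, eval_C, isBalanced_C hc, by simp [coeffNorm_C, -eq_intCast]⟩
    obtain ⟨r, d, hval, hr, -, hsave⟩ := exists_carry hp c
    specialize hsave hc
    obtain ⟨Q, hQval, hQ, hcost⟩ := ih _ (by omega) d rfl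
    refine ⟨Q * X + C r, by simp [hQval, hval, add_comm], hQ.mul_X_add_C hr, ?_⟩
    have hdeg := natDegree_mul_X_add_C_le Q r
    rw [coeffNorm_mul_X_add_C]
    omega

theorem exists_isBalanced_eval_eq_eval (hp : 3 ≤ p.natAbs) (P : ℤ[X]) :
    ∃ Q : ℤ[X], Q.eval p = P.eval p ∧ IsBalanced (p.natAbs / 2) Q ∧
      coeffNorm Q ≤ coeffNorm P ∧
      2 * Q.natDegree + coeffNorm Q ≤ 2 * P.natDegree + coeffNorm P := by
  induction hn : P.natDegree generalizing P with
  | zero =>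
    obtain ⟨c, rfl⟩ := natDegree_eq_zero.1 hn
    obtain ⟨Q, hval, hQ, hcost⟩ := exists_isBalanced_eval_eq hp c
    rw [coeffNorm_C, eval_C]
    exact ⟨Q, hval, hQ, by omega, by omega⟩
  | succ n ih =>
    obtain ⟨R, c, rfl⟩ : ∃ (R : ℤ[X]) (c : ℤ), P = R * X + C c :=
      ⟨P.divX, P.coeff 0, (divX_mul_X_add P).symm⟩
    obtain ⟨r, d, hval, hr, hrd, -⟩ := exists_carry hp c
    have hR : R.natDegree = n := by
      have hR0 : R ≠ 0 := by
        rintro rfl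
        simp at hn
      rwa [natDegree_add_C, natDegree_mul_X hR0, Nat.add_right_cancel_iff] at hn
    obtain ⟨Q, hQval, hQ, hnorm, hcost⟩ := ih (R + C d) (by rw [natDegree_add_C, hR])
    have hcarry := coeffNorm_add_le R (C d)
    have hdeg := natDegree_mul_X_add_C_le Q r
    rw [coeffNorm_C] at hcarry
    refine ⟨Q * X + C r, ?_, hQ.mul_X_add_C hr, ?_, ?_⟩
    · simp only [eval_add, eval_mul, eval_X, eval_C, hQval, hval]
      ring
    · rw [coeffNorm_mul_X_add_C, coeffNorm_mul_X_add_C]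
      omega
    · rw [coeffNorm_mul_X_add_C, coeffNorm_mul_X_add_C]
      omega

end Balancing

section Paths

variable {G : Type*} [Group G] {a t : G} {p : ℤ}

theorem normalForm_mul_zpow (hat : SemiconjBy t a (a ^ p)) (m s : ℕ) (j c : ℤ) :
    normalForm a t m j s * a ^ c = normalForm a t m (j + c * p ^ s) s := by
  have hcomm := (semiconjBy_pow_zpow hat s c).eq
  simp only [normalForm, zpow_natCast, zpow_add, mul_assoc, hcomm]

theorem normalForm_mul (a t : G) (m s : ℕ) (j : ℤ) :
    normalForm a t m j s * t = normalForm a t m j (s + 1) := by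
  simp only [normalForm, zpow_natCast, pow_succ, mul_assoc]

theorem normalForm_succ_mul_inv (a t : G) (m s : ℕ) (j : ℤ) :
    normalForm a t m j (s + 1) * t⁻¹ = normalForm a t m j s := by
  rw [← normalForm_mul, mul_inv_cancel_right]

theorem normalForm_zero_mul_inv (hat : SemiconjBy t a (a ^ p)) (m : ℕ) (j : ℤ) :
    normalForm a t m j 0 * t⁻¹ = normalForm a t (m + 1) (j * p) 0 := by
  have hcomm : a ^ (j * p) = t * a ^ j * t⁻¹ := by
    simpa using (eq_mul_inv_iff_mul_eq.2 (semiconjBy_pow_zpow hat 1 j).eq.symm)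
  rw [normalForm, normalForm, hcomm]
  group

/-- The length of a shortest path of heights that starts at `0`, visits `-m` and `natDegree P - m`,
ends at `s - m`, and spends `|P.coeff u|` letters `a^{±1}` at height `u - m`. The subtraction is
truncated: only the part of the climb above both endpoints is travelled twice. -/
def pathCost (m s : ℕ) (P : ℤ[X]) : ℕ :=
  m + s + 2 * (P.natDegree - max m s) + coeffNorm P

theorem pathCost_add_C_mul_X_pow_le (m s : ℕ) (P : ℤ[X]) (c : ℤ) :
    pathCost m s (P + C c * X ^ s) ≤ pathCost m s P + c.natAbs := by
  have hdeg := (natDegree_add_le P (C c * X ^ s)).trans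
    (max_le_max_left _ (natDegree_C_mul_X_pow_le c s))
  have hnorm := coeffNorm_add_le P (C c * X ^ s)
  rw [coeffNorm_C_mul_X_pow] at hnorm
  unfold pathCost
  omega

theorem pathCost_succ_right_le (m s : ℕ) (P : ℤ[X]) :
    pathCost m (s + 1) P ≤ pathCost m s P + 1 := by
  unfold pathCost
  omega

theorem pathCost_le_succ_right (m s : ℕ) (P : ℤ[X]) :
    pathCost m s P ≤ pathCost m (s + 1) P + 1 := by
  unfold pathCost
  omega

theorem pathCost_succ_left_mul_X_le (m : ℕ) (P : ℤ[X]) :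
    pathCost (m + 1) 0 (P * X) ≤ pathCost m 0 P + 1 := by
  have hdeg := natDegree_mul_le_of_le (le_refl P.natDegree) (natDegree_X_le (R := ℤ))
  unfold pathCost
  rw [coeffNorm_mul_X]
  omega

theorem exists_normalForm_mul_letter (hat : SemiconjBy t a (a ^ p)) (m s : ℕ) (P : ℤ[X]) {x : G}
    (hx : x ∈ letters a t) :
    ∃ (m' s' : ℕ) (P' : ℤ[X]),
      normalForm a t m (P.eval p) s * x = normalForm a t m' (P'.eval p) s' ∧
      pathCost m' s' P' ≤ pathCost m s P + 1 := by
  have deposit (c : ℤ) : normalForm a t m (P.eval p) s * a ^ c =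
      normalForm a t m ((P + C c * X ^ s).eval p) s := by
    simp [normalForm_mul_zpow hat]
  rcases hx with rfl | rfl | rfl | rfl
  · exact ⟨m, s, _, by simpa using deposit 1, pathCost_add_C_mul_X_pow_le m s P 1⟩
  · exact ⟨m, s, _, by simpa using deposit (-1), pathCost_add_C_mul_X_pow_le m s P (-1)⟩
  · exact ⟨m, s + 1, P, normalForm_mul .., pathCost_succ_right_le m s P⟩
  · cases s with
    | zero =>
      exact ⟨m + 1, 0, P * X, by simp [normalForm_zero_mul_inv hat],
        pathCost_succ_left_mul_X_le m P⟩
    | succ s => exact ⟨m, s, P, normalForm_succ_mul_inv .., pathCost_le_succ_right m s P⟩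

theorem exists_normalForm_of_mem_letters_pow (hat : SemiconjBy t a (a ^ p)) {n : ℕ} {g : G}
    (hg : g ∈ letters a t ^ n) :
    ∃ (m s : ℕ) (P : ℤ[X]), g = normalForm a t m (P.eval p) s ∧ pathCost m s P ≤ n := by
  induction n generalizing g with
  | zero =>
    obtain rfl : g = 1 := by simpa using hg
    exact ⟨0, 0, 0, by simp [normalForm], by simp [pathCost, coeffNorm]⟩
  | succ n ih =>
    rw [pow_succ] at hg
    obtain ⟨g, hg, x, hx, rfl⟩ := hg
    obtain ⟨m, s, P, rfl, hcost⟩ := ih hg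
    obtain ⟨m', s', P', hval, hcost'⟩ := exists_normalForm_mul_letter hat m s P hx
    exact ⟨m', s', P', hval, by omega⟩

theorem normalForm_zero_eq_sub (a t : G) (m s : ℕ) :
    normalForm a t m 0 s = normalForm a t (m - s) 0 (s - m) := by
  simp only [normalForm, zpow_zero, mul_one, ← zpow_add]
  congr 1
  omega

theorem exists_isBalanced_normalForm (hat : SemiconjBy t a (a ^ p)) (hp : 3 ≤ p.natAbs) {g : G}
    (hg : g ∈ Subgroup.closure {a, t}) :
    ∃ (m s : ℕ) (P : ℤ[X]), g = normalForm a t m (P.eval p) s ∧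
      IsBalanced (p.natAbs / 2) P ∧ (P = 0 → m = 0 ∨ s = 0) ∧
      pathCost m s P ≤ wordLength (letters a t) g := by
  obtain ⟨m, s, P₀, hval, hcost⟩ := exists_normalForm_of_mem_letters_pow hat
    (mem_pow_wordLength (exists_mem_letters_pow_of_mem_closure hg))
  obtain ⟨P, hPval, hP, hnorm, hdeg⟩ := exists_isBalanced_eval_eq_eval hp P₀
  unfold pathCost at hcost ⊢
  rw [← hPval] at hval
  rcases eq_or_ne P 0 with rfl | hP0
  · rw [eval_zero, normalForm_zero_eq_sub] at hval
    rw [natDegree_zero] at hdeg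
    exact ⟨m - s, s - m, 0, by rwa [eval_zero], hP, fun _ => by omega,
      by rw [natDegree_zero]; omega⟩
  · exact ⟨m, s, P, hval, hP, fun h0 => absurd h0 hP0, by omega⟩

theorem wordLength_normalForm_eq_descending (hat : SemiconjBy t a (a ^ p)) {m s : ℕ} {P : ℤ[X]}
    (hms : s ≤ m)
    (hcost : pathCost m s P ≤ wordLength (letters a t) (normalForm a t m (P.eval p) s)) :
    (wordLength (letters a t) (normalForm a t m (P.eval p) s) : ℤ) =
      |(P.natDegree : ℤ) - m| + P.natDegree + s +
        ∑ u ∈ Finset.range (P.natDegree + 1), |P.coeff u| := by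
  have hle := wordLength_normalForm_le_descending hat m s P.natDegree P.coeff
  rw [← eval_eq_sum_range, ← coeffNorm_eq_sum_range] at hle
  rw [← natCast_coeffNorm, Int.abs_eq_natAbs]
  unfold pathCost at hcost
  omega

theorem wordLength_normalForm_eq_ascending (hat : SemiconjBy t a (a ^ p)) {m s : ℕ} {P : ℤ[X]}
    (hms : m ≤ s)
    (hcost : pathCost m s P ≤ wordLength (letters a t) (normalForm a t m (P.eval p) s)) :
    (wordLength (letters a t) (normalForm a t m (P.eval p) s) : ℤ) =
      m + P.natDegree + |(s : ℤ) - P.natDegree| +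
        ∑ u ∈ Finset.range (P.natDegree + 1), |P.coeff u| := by
  have hle := wordLength_normalForm_le_ascending hat m s P.natDegree P.coeff
  rw [← eval_eq_sum_range, ← coeffNorm_eq_sum_range] at hle
  rw [← natCast_coeffNorm, Int.abs_eq_natAbs]
  unfold pathCost at hcost
  omega

end Paths

theorem BS_geodesic_form_general {G : Type*} [Group G] {a t g : G} {p : ℤ} (hp : 3 ≤ |p|)
    (hat : t * a * t⁻¹ = a ^ p) (hg : g ∈ Subgroup.closure {a, t}) :
    ∃ (m s : ℕ) (k : ℤ) (i : ℤ → ℤ),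
      -(m : ℤ) ≤ k ∧
      (∀ l : ℤ, -(m : ℤ) ≤ l → l ≤ k - 1 → |i l| ≤ |p| / 2) ∧
      |i k| ≤ |p| / 2 + 1 ∧
      g = t ^ (-(m : ℤ)) *
            a ^ (∑ u ∈ Finset.range (k + m + 1).toNat, i ((u : ℤ) - m) * p ^ u) *
            t ^ (s : ℤ) ∧
      (((s : ℤ) ≤ (m : ℤ) ∧ 0 < m ∧ (1 ≤ |i k| ∨ (k = -(m : ℤ) ∧ s = 0)) ∧
          g = t ^ k *
              (List.ofFn (fun u : Fin (k + m + 1).toNat =>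
                a ^ (i (k - (u : ℤ))) * t ^ (-1 : ℤ))).prod *
              t ^ ((s : ℤ) + 1) ∧
          (wordLength (letters a t) g : ℤ) = |k| + k + m + s +
              ∑ u ∈ Finset.range (k + m + 1).toNat, |i ((u : ℤ) - m)|)
        ∨
       ((m : ℤ) ≤ (s : ℤ) ∧ (1 ≤ |i k| ∨ (k = 0 ∧ m = 0)) ∧
          g = t ^ (-(m : ℤ)) *
              (List.ofFn (fun u : Fin (k + m + 1).toNat =>
                a ^ (i ((u : ℤ) - m)) * t)).prod *
              t ^ ((s : ℤ) - m - k - 1) ∧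
          (wordLength (letters a t) g : ℤ) = m + (k + m) + |(s : ℤ) - m - k| +
              ∑ u ∈ Finset.range (k + m + 1).toNat, |i ((u : ℤ) - m)|)) := by
  replace hat : SemiconjBy t a (a ^ p) := mul_inv_eq_iff_eq_mul.1 hat
  obtain ⟨m, s, P, rfl, ⟨hlow, hlead⟩, hzero, hcost⟩ :=
    exists_isBalanced_normalForm hat (by zify; exact hp) hg
  have hlead_pos : 1 ≤ |P.coeff P.natDegree| ∨ P.natDegree = 0 ∧ (m = 0 ∨ s = 0) := by
    rcases eq_or_ne P 0 with rfl | hP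
    exacts [.inr ⟨natDegree_zero, hzero rfl⟩, .inl (Int.one_le_abs (leadingCoeff_ne_zero.2 hP))]
  have hdigit (u : ℕ) : ((P.natDegree : ℤ) - m - u + m).toNat = P.natDegree - u := by omega
  refine ⟨m, s, P.natDegree - m, fun l => P.coeff (l + m).toNat, by omega, fun l _ _ => ?_, ?_⟩
  · have hdigit_le := hlow (l + m).toNat (by omega)
    zify at hdigit_le
    exact hdigit_le
  simp only [hdigit, sub_add_cancel, Int.toNat_natCast, Int.toNat_natCast_add_one, zpow_neg_one]
  refine ⟨by zify at hlead; exact hlead, by rw [← eval_eq_sum_range, normalForm], ?_⟩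
  by_cases hms : s ≤ m ∧ 0 < m
  · refine .inl ⟨by omega, hms.2, by omega, ?_, ?_⟩
    · rw [eval_eq_sum_range]
      exact normalForm_eq_descendingWord hat m s _ _
    · rw [wordLength_normalForm_eq_descending hat hms.1 hcost]
      ring
  · refine .inr ⟨by omega, by omega, ?_, ?_⟩
    · rw [eval_eq_sum_range, sub_sub_sub_cancel_right]
      exact normalForm_eq_ascendingWord hat m s _ _
    · rw [wordLength_normalForm_eq_ascending hat (by omega) hcost, sub_sub_sub_cancel_right]

section BaumslagSolitar

theorem BSt_conj (p : ℤ) : BSt p * BSa p * (BSt p)⁻¹ = BSa p ^ p := by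
  have hrel := PresentedGroup.one_of_mem (rels := BSRel p) (Set.mem_singleton _)
  rwa [← mul_inv_eq_one, ← zpow_neg]

theorem mem_closure_BSa_BSt (p : ℤ) (g : BS p) : g ∈ Subgroup.closure {BSa p, BSt p} := by
  have hrange : Set.range (PresentedGroup.of (rels := BSRel p)) = {BSa p, BSt p} := by
    ext x
    simp [Fin.exists_fin_two, BSa, BSt, eq_comm]
  rw [← hrange, PresentedGroup.closure_range_of]
  exact Subgroup.mem_top g

theorem BSlength_eq_wordLength (p : ℤ) (g : BS p) :
    BSlength p g = wordLength (letters (BSa p) (BSt p)) g :=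
  congrArg sInf (Set.ext fun _ => mem_pow_iff_exists_list.symm)

end BaumslagSolitar

/-- Every element `g` of `BS(1,p)` (for `p ≥ 3`, with `h = ⌊p/2⌋`) is represented by a
geodesic in one of two standard forms, and moreover `g = t^{-m} a^j t^s` with
`j = Σ_{l=-m}^{k} i_l p^{l+m}`.  In form (1) the geodesic is
`t^k a^{i_k} t⁻¹ a^{i_{k-1}} t⁻¹ ⋯ t⁻¹ a^{i_{-m}} t^s` and its length is
`|k| + k + m + s + Σ |i_l|`; in form (2) the geodesic is
`t^{-m} a^{i_{-m}} t a^{i_{-m+1}} t ⋯ t a^{i_k} t^{s-m-k}` and its length is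
`m + (k+m) + |s-m-k| + Σ |i_l|`. -/
theorem BS_geodesic_form (p : ℤ) (hp : 3 ≤ p) (g : BS p) :
    ∃ (m s : ℕ) (k : ℤ) (i : ℤ → ℤ),
      -(m : ℤ) ≤ k ∧
      (∀ l : ℤ, -(m : ℤ) ≤ l → l ≤ k - 1 → |i l| ≤ p / 2) ∧
      |i k| ≤ p / 2 + 1 ∧
      g = (BSt p) ^ (-(m : ℤ)) *
            (BSa p) ^ (∑ u ∈ Finset.range (k + m + 1).toNat, i ((u : ℤ) - m) * p ^ u) *
            (BSt p) ^ (s : ℤ) ∧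
      (((s : ℤ) ≤ (m : ℤ) ∧ 0 < m ∧ (1 ≤ |i k| ∨ (k = -(m : ℤ) ∧ s = 0)) ∧
          g = (BSt p) ^ k *
              (List.ofFn (fun u : Fin (k + m + 1).toNat =>
                (BSa p) ^ (i (k - (u : ℤ))) * (BSt p) ^ (-1 : ℤ))).prod *
              (BSt p) ^ ((s : ℤ) + 1) ∧
          (BSlength p g : ℤ) = |k| + k + m + s +
              ∑ u ∈ Finset.range (k + m + 1).toNat, |i ((u : ℤ) - m)|)
        ∨
       ((m : ℤ) ≤ (s : ℤ) ∧ (1 ≤ |i k| ∨ (k = 0 ∧ m = 0)) ∧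
          g = (BSt p) ^ (-(m : ℤ)) *
              (List.ofFn (fun u : Fin (k + m + 1).toNat =>
                (BSa p) ^ (i ((u : ℤ) - m)) * BSt p)).prod *
              (BSt p) ^ ((s : ℤ) - m - k - 1) ∧
          (BSlength p g : ℤ) = m + (k + m) + |(s : ℤ) - m - k| +
              ∑ u ∈ Finset.range (k + m + 1).toNat, |i ((u : ℤ) - m)|)) := by
  have hp_abs : |p| = p := abs_of_pos (by omega)
  simpa only [BSlength_eq_wordLength, hp_abs] using
    BS_geodesic_form_general (hp_abs.symm ▸ hp) (BSt_conj p) (mem_closure_BSa_BSt p g)
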